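/- There exists a 2-(24,4,1) packing with 42 blocks whose leave is a vertex-disjoint union of four cycles of length 3 and three cycles of length 4, covering all 24 points (leave type 3^4 4^3). -/

import Mathlib

/-- A 2-(24,4,1) packing: a collection of 4-element blocks on 24 points such that
every pair of distinct points lies in at most one block. -/
def IsPacking (B : Finset (Finset (Fin 24))) : Prop :=
  (∀ b ∈ B, b.card = 4) ∧
  ∀ p q : Fin 24, p ≠ q → ∀ b₁ ∈ B, ∀ b₂ ∈ B,
    p ∈ b₁ → q ∈ b₁ → p ∈ b₂ → q ∈ b₂ → b₁ = b₂

/-- Adjacency in the leave of a packing: the pair of distinct points is covered by no block. -/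
def LeaveAdj (B : Finset (Finset (Fin 24))) (p q : Fin 24) : Prop :=
  p ≠ q ∧ ∀ b ∈ B, ¬ (p ∈ b ∧ q ∈ b)

/-- The leave of the packing `B` is a vertex-disjoint union of cycles whose lengths are
given by the list `L`, covering all 24 points. -/
def LeaveIsCycleType (B : Finset (Finset (Fin 24))) (L : List ℕ) : Prop :=
  ∃ f : (i : Fin L.length) → ZMod (L.get i) → Fin 24,
    Function.Bijective (fun x : Σ i : Fin L.length, ZMod (L.get i) => f x.1 x.2) ∧
    ∀ p q : Fin 24, LeaveAdj B p q ↔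
      ∃ i k, (p = f i k ∧ q = f i (k + 1)) ∨ (q = f i k ∧ p = f i (k + 1))

open Finset MulAction
open scoped Pointwise

/-!
Take as points four triangles indexed by the plane `V = (ℤ/2)²` and three squares indexed by
`ℤ/3`. The translations of `V`, together with a linear map of order 3 that permutes the three
nonzero linear functionals `V → ℤ/2`, form a copy of the alternating group `A₄`; it acts on the
points, a translation turning the `i`-th square by a half-turn exactly when the `i`-th functional
does not vanish on it. Five blocks generate the packing: their orbits have sizes 3, 3, 12, 12, 12.

By symmetry it is enough to look at the pairs through three points in order to see that every pair
which is not an edge of one of the seven cycles is covered. Since the 42 blocks contain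
`42 · 6 = 252` pairs and there are only `276 - 24 = 252` pairs to cover, each of them is then
covered exactly once and no edge of a cycle is covered.
-/

section Counting

variable {ι β : Type*} [DecidableEq β]

lemma pairwiseDisjoint_of_sum_card_le_card_biUnion {s : Finset ι} {f : ι → Finset β}
    (h : ∑ i ∈ s, #(f i) ≤ #(s.biUnion f)) : (s : Set ι).PairwiseDisjoint f := by
  classical
  intro i hi j hj hij
  have hsplit : s.biUnion f = (f i ∪ f j) ∪ ((s.erase i).erase j).biUnion f := by
    rw [union_assoc, ← biUnion_insert, insert_erase (mem_erase.2 ⟨hij.symm, hj⟩), ← biUnion_insert,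
      insert_erase hi]
  have hsum : ∑ k ∈ s, #(f k) = #(f i) + #(f j) + ∑ k ∈ (s.erase i).erase j, #(f k) := by
    rw [add_assoc, add_sum_erase _ (fun k => #(f k)) (mem_erase.2 ⟨hij.symm, hj⟩),
      add_sum_erase _ (fun k => #(f k)) hi]
  have hunion := card_union_le (f i ∪ f j) (((s.erase i).erase j).biUnion f)
  have hrest := card_biUnion_le (s := (s.erase i).erase j) (t := f)
  rw [hsplit, hsum] at h
  exact card_union_eq_card_add_card.1 (le_antisymm (card_union_le _ _) (by omega))

end Counting

section UncoveredPairs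

variable {α : Type*} [Fintype α] [DecidableEq α]

/-- The leave of a family of blocks `B` on an arbitrary finite point set, encoded as the set of
ordered pairs of distinct points that lie in no common block. -/
def uncoveredPairs (B : Finset (Finset α)) : Finset (α × α) :=
  univ.offDiag \ B.biUnion offDiag

lemma mem_uncoveredPairs {B : Finset (Finset α)} {p q : α} :
    (p, q) ∈ uncoveredPairs B ↔ p ≠ q ∧ ∀ b ∈ B, ¬ (p ∈ b ∧ q ∈ b) := by
  simp only [uncoveredPairs, mem_sdiff, mem_offDiag, mem_univ, true_and, mem_biUnion]
  grind

theorem pairwiseDisjoint_offDiag_and_uncoveredPairs_eq {B : Finset (Finset α)}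
    {E : Finset (α × α)} (hcover : uncoveredPairs B ⊆ E)
    (hcard : ∑ b ∈ B, #b.offDiag + #E ≤ #(univ : Finset α).offDiag) :
    (B : Set (Finset α)).PairwiseDisjoint offDiag ∧ uncoveredPairs B = E := by
  have hpairs : #(univ : Finset α).offDiag ≤ #(uncoveredPairs B) + #(B.biUnion offDiag) :=
    card_le_card_sdiff_add_card
  have hE : #(uncoveredPairs B) ≤ #E := card_le_card hcover
  have hB : #(B.biUnion offDiag) ≤ ∑ b ∈ B, #b.offDiag := card_biUnion_le
  exact ⟨pairwiseDisjoint_of_sum_card_le_card_biUnion (by omega),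
    eq_of_subset_of_card_le hcover (by omega)⟩

end UncoveredPairs

section Symmetry

variable {G α β : Type*} [Group G] [MulAction G α] [MulAction G β] [DecidableEq α] [DecidableEq β]

lemma stabilizer_le_stabilizer_smul [DecidableEq G] (S : Finset G) (T : Finset β) :
    stabilizer G S ≤ stabilizer G (S • T) := by
  intro g hg
  rw [mem_stabilizer_iff] at hg ⊢
  rw [← smul_assoc, hg]

lemma stabilizer_le_stabilizer_uncoveredPairs [Fintype α] (B : Finset (Finset α)) :
    stabilizer G B ≤ stabilizer G (uncoveredPairs B) := by
  intro g hg
  refine mem_stabilizer_finset'.2 fun ⟨p, q⟩ hpq => ?_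
  obtain ⟨hne, huncov⟩ := mem_uncoveredPairs.1 hpq
  refine mem_uncoveredPairs.2 ⟨(MulAction.injective g).ne hne, fun b hb hmem => ?_⟩
  refine huncov (g⁻¹ • b) (mem_stabilizer_finset'.1 (inv_mem hg) hb) ?_
  simpa only [mem_inv_smul_finset_iff] using hmem

lemma subset_of_forall_exists_smul_mem {S T : Finset β}
    (h : ∀ x, ∃ g ∈ stabilizer G S ⊓ stabilizer G T, g • x ∈ S → g • x ∈ T) : S ⊆ T := by
  intro x hx
  obtain ⟨g, ⟨hgS, hgT⟩, hg⟩ := h x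
  exact (mem_stabilizer_finset.1 hgT x).1 (hg ((mem_stabilizer_finset.1 hgS x).2 hx))

end Symmetry

section CycleEdges

variable {α : Type*} [Fintype α] [DecidableEq α]

/-- The edges, as ordered pairs in both directions, of the graph joining each point to its image
under the permutation `s`; it is the union of the cycles of `s`. -/
def cycleEdges (s : Equiv.Perm α) : Finset (α × α) :=
  {x | x.2 = s x.1 ∨ x.1 = s x.2}

lemma mem_cycleEdges {s : Equiv.Perm α} {p q : α} :
    (p, q) ∈ cycleEdges s ↔ q = s p ∨ p = s q := by
  simp [cycleEdges]

lemma mem_stabilizer_cycleEdges {s g : Equiv.Perm α} (h : Commute g s) :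
    g ∈ stabilizer (Equiv.Perm α) (cycleEdges s) := by
  have hcomm (x : α) : g (s x) = s (g x) := DFunLike.congr_fun h.eq x
  refine mem_stabilizer_finset.2 fun ⟨p, q⟩ => ?_
  change (g p, g q) ∈ cycleEdges s ↔ (p, q) ∈ cycleEdges s
  simp only [mem_cycleEdges, ← hcomm, g.apply_eq_iff_eq]

end CycleEdges

section Transport

variable {α : Type*} (e : α ≃ Fin 24) (B : Finset (Finset α))

/-- The family of blocks on `Fin 24` obtained from `B` by numbering its points with `e`. -/
def relabel : Finset (Finset (Fin 24)) :=
  B.map e.finsetCongr.toEmbedding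

lemma card_relabel : #(relabel e B) = #B :=
  card_map _

variable {B}

lemma isPacking_relabel (hcard : ∀ b ∈ B, #b = 4)
    (hdisj : (B : Set (Finset α)).PairwiseDisjoint offDiag) : IsPacking (relabel e B) := by
  simp only [IsPacking, relabel, forall_mem_map]
  refine ⟨fun b hb => (card_map _).trans (hcard b hb), ?_⟩
  refine e.forall_congr_right.1 fun p => e.forall_congr_right.1 fun q => ?_
  intro hpq b₁ hb₁ b₂ hb₂ hp₁ hq₁ hp₂ hq₂
  simp only [Equiv.toEmbedding_apply, Equiv.finsetCongr_apply, mem_map_equiv,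
    Equiv.symm_apply_apply] at hp₁ hq₁ hp₂ hq₂
  have hne : p ≠ q := ne_of_apply_ne e hpq
  rw [hdisj.elim_finset hb₁ hb₂ (p, q) (mem_offDiag.2 ⟨hp₁, hq₁, hne⟩)
    (mem_offDiag.2 ⟨hp₂, hq₂, hne⟩)]

lemma leaveAdj_relabel_iff [Fintype α] [DecidableEq α] {p q : α} :
    LeaveAdj (relabel e B) (e p) (e q) ↔ (p, q) ∈ uncoveredPairs B := by
  have hblocks : (∀ b ∈ relabel e B, ¬ (e p ∈ b ∧ e q ∈ b)) ↔ ∀ b ∈ B, ¬ (p ∈ b ∧ q ∈ b) := by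
    rw [relabel, forall_mem_map]
    simp only [Equiv.toEmbedding_apply, Equiv.finsetCongr_apply, mem_map_equiv,
      Equiv.symm_apply_apply]
  rw [LeaveAdj, hblocks, e.injective.ne_iff, mem_uncoveredPairs]

theorem leaveIsCycleType_relabel [Fintype α] [DecidableEq α] {L : List ℕ} {s : Equiv.Perm α}
    (hB : uncoveredPairs B = cycleEdges s) {f : (i : Fin L.length) → ZMod (L.get i) → α}
    (hbij : Function.Bijective fun x : Σ i : Fin L.length, ZMod (L.get i) => f x.1 x.2)
    (hsucc : ∀ i k, s (f i k) = f i (k + 1)) : LeaveIsCycleType (relabel e B) L := by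
  have hstep (p q : α) : q = s p ↔ ∃ i k, p = f i k ∧ q = f i (k + 1) := by
    constructor
    · rintro rfl
      obtain ⟨⟨i, k⟩, rfl⟩ := hbij.surjective p
      exact ⟨i, k, rfl, hsucc i k⟩
    · rintro ⟨i, k, rfl, rfl⟩
      exact (hsucc i k).symm
  refine ⟨fun i k => e (f i k), e.bijective.comp hbij, ?_⟩
  refine e.forall_congr_right.1 fun p => e.forall_congr_right.1 fun q => ?_
  simp only [leaveAdj_relabel_iff, hB, mem_cycleEdges, hstep, e.apply_eq_iff_eq, exists_or]

end Transport

/-- The points of the packing, arranged by the cycles of its leave: `.inl (v, k)` is the `k`-th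
vertex of the triangle indexed by `v : (ℤ/2)²`, and `.inr (i, k)` is the `k`-th vertex of the
square indexed by `i : ℤ/3`. -/
abbrev LeavePoint : Type :=
  (ZMod 2 × ZMod 2) × ZMod 3 ⊕ ZMod 3 × ZMod 4

namespace LeavePoint

/-- One step around each triangle and each square. -/
def successor : Equiv.Perm LeavePoint :=
  .sumCongr (.prodCongr (.refl _) (.addRight 1)) (.prodCongr (.refl _) (.addRight 1))

/-- The action of the translation by `c` of `(ℤ/2)²`: it translates the indices of the triangles
and turns the `i`-th square by a half-turn if the `i`-th nonzero linear functional does not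
vanish at `c`. -/
def translation (c : ZMod 2 × ZMod 2) : Equiv.Perm LeavePoint :=
  .sumCongr (.prodCongr (.addRight c) (.refl _))
    (.prodShear (.refl _) fun i => .addRight (2 * (![c.1, c.2, c.1 + c.2] i).cast))

/-- The action of the linear map `(x, y) ↦ (x + y, x)` of order 3, which permutes the three nonzero
linear functionals of `(ℤ/2)²` cyclically. -/
def rotation : Equiv.Perm LeavePoint :=
  .sumCongr
    (.prodCongr ((Equiv.prodShear (.refl _) .addLeft).trans (.prodComm _ _)) (.addRight 1))
    (.prodCongr (.addRight 1) (.refl _))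

/-- The symmetry group of the packing, isomorphic to `A₄`, as a finite set of permutations. -/
def symmetries : Finset (Equiv.Perm LeavePoint) :=
  univ.image fun g : Fin 3 × ZMod 2 × ZMod 2 => rotation ^ g.1.val * translation g.2

/-- Representatives of the orbits of the blocks under `symmetries`, found by computer search. -/
def baseBlocks : Finset (Finset LeavePoint) :=
  {{.inl ((0, 0), 0), .inl ((0, 1), 0), .inl ((1, 0), 0), .inl ((1, 1), 0)},
    {.inr (0, 0), .inr (0, 2), .inr (1, 1), .inr (1, 3)},
    {.inl ((0, 0), 0), .inl ((0, 1), 1), .inr (0, 0), .inr (1, 0)},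
    {.inl ((0, 0), 0), .inl ((1, 0), 2), .inr (0, 1), .inr (1, 2)},
    {.inl ((0, 0), 0), .inl ((0, 1), 2), .inr (1, 1), .inr (2, 1)}}

/-- The blocks of the packing: the union of the orbits of the base blocks. -/
def blocks : Finset (Finset LeavePoint) :=
  symmetries • baseBlocks

lemma card_blocks : #blocks = 42 := by
  decide +kernel

lemma card_of_mem_blocks {b : Finset LeavePoint} (hb : b ∈ blocks) : #b = 4 := by
  have hbase : ∀ b₀ ∈ baseBlocks, #b₀ = 4 := by decide +kernel
  obtain ⟨g, -, b₀, hb₀, rfl⟩ := mem_smul.1 hb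
  rw [card_smul_finset, hbase b₀ hb₀]

lemma commute_successor_of_mem_symmetries {g : Equiv.Perm LeavePoint} (hg : g ∈ symmetries) :
    Commute g successor := by
  have hrotation : Commute rotation successor := by
    unfold Commute SemiconjBy
    decide +kernel
  have htranslation : ∀ c, Commute (translation c) successor := by
    unfold Commute SemiconjBy
    decide +kernel
  obtain ⟨⟨n, c⟩, -, rfl⟩ := mem_image.1 hg
  exact (hrotation.pow_left n).mul_left (htranslation c)

set_option synthInstance.maxSize 256 in
lemma mem_stabilizer_blocks_of_mem_symmetries {g : Equiv.Perm LeavePoint} (hg : g ∈ symmetries) :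
    g ∈ stabilizer (Equiv.Perm LeavePoint) blocks := by
  have hrotation : rotation ∈ stabilizer (Equiv.Perm LeavePoint) symmetries :=
    mem_stabilizer_finset_iff_smul_finset_subset.2 (by decide +kernel)
  have htranslation : ∀ c, translation c ∈ stabilizer (Equiv.Perm LeavePoint) symmetries :=
    fun c => mem_stabilizer_finset_iff_smul_finset_subset.2 (by revert c; decide +kernel)
  obtain ⟨⟨n, c⟩, -, rfl⟩ := mem_image.1 hg
  exact stabilizer_le_stabilizer_smul _ _ (mul_mem (pow_mem hrotation n) (htranslation c))

/-- Representatives of the orbits of the points under `symmetries`. -/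
def basePoints : Finset LeavePoint :=
  {.inl ((0, 0), 0), .inr (0, 0), .inr (0, 1)}

lemma exists_mem_symmetries_apply_mem_basePoints :
    ∀ p, ∃ g ∈ symmetries, g p ∈ basePoints := by
  decide +kernel

set_option synthInstance.maxSize 256 in
lemma mem_cycleEdges_of_mem_basePoints {p q : LeavePoint} (hp : p ∈ basePoints)
    (hpq : (p, q) ∈ uncoveredPairs blocks) : (p, q) ∈ cycleEdges successor := by
  have hcovered : ∀ p ∈ basePoints, ∀ q,
      p = q ∨ (q = successor p ∨ p = successor q) ∨ ∃ b ∈ blocks, p ∈ b ∧ q ∈ b := by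
    decide +kernel
  obtain ⟨hne, huncov⟩ := mem_uncoveredPairs.1 hpq
  obtain heq | hedge | ⟨b, hb, hmem⟩ := hcovered p hp q
  · exact absurd heq hne
  · exact mem_cycleEdges.2 hedge
  · exact absurd hmem (huncov b hb)

lemma uncoveredPairs_blocks_subset : uncoveredPairs blocks ⊆ cycleEdges successor := by
  refine subset_of_forall_exists_smul_mem (G := Equiv.Perm LeavePoint) fun ⟨p, q⟩ => ?_
  obtain ⟨g, hg, hp⟩ := exists_mem_symmetries_apply_mem_basePoints p
  exact ⟨g, ⟨stabilizer_le_stabilizer_uncoveredPairs _ (mem_stabilizer_blocks_of_mem_symmetries hg),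
    mem_stabilizer_cycleEdges (commute_successor_of_mem_symmetries hg)⟩,
    mem_cycleEdges_of_mem_basePoints hp⟩

lemma sum_card_offDiag_blocks : ∑ b ∈ blocks, #b.offDiag = 42 * 12 := by
  have hpairs : ∀ b ∈ blocks, #b.offDiag = 12 := fun b hb => by
    rw [offDiag_card, card_of_mem_blocks hb]
  rw [sum_const_nat hpairs, card_blocks]

theorem pairwiseDisjoint_offDiag_blocks_and_uncoveredPairs_blocks :
    (blocks : Set (Finset LeavePoint)).PairwiseDisjoint offDiag ∧
      uncoveredPairs blocks = cycleEdges successor := by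
  have hedges : #(cycleEdges successor) = 48 := by decide +kernel
  have hpairs : #(univ : Finset LeavePoint).offDiag = 24 * 23 := by decide +kernel
  refine pairwiseDisjoint_offDiag_and_uncoveredPairs_eq uncoveredPairs_blocks_subset ?_
  rw [sum_card_offDiag_blocks, hedges, hpairs]

/-- The cycles of `successor`, in the order of the lengths `[3, 3, 3, 3, 4, 4, 4]`. -/
def cycle : (i : Fin [3, 3, 3, 3, 4, 4, 4].length) → ZMod ([3, 3, 3, 3, 4, 4, 4].get i) → LeavePoint
  | 0, k => .inl ((0, 0), k)
  | 1, k => .inl ((0, 1), k)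
  | 2, k => .inl ((1, 0), k)
  | 3, k => .inl ((1, 1), k)
  | 4, k => .inr (0, k)
  | 5, k => .inr (1, k)
  | 6, k => .inr (2, k)

instance (i : Fin [3, 3, 3, 3, 4, 4, 4].length) : NeZero ([3, 3, 3, 3, 4, 4, 4].get i) :=
  ⟨by revert i; decide⟩

lemma bijective_cycle : Function.Bijective
    fun x : Σ i : Fin [3, 3, 3, 3, 4, 4, 4].length, ZMod ([3, 3, 3, 3, 4, 4, 4].get i) =>
      cycle x.1 x.2 := by
  decide +kernel

lemma successor_cycle : ∀ i k, successor (cycle i k) = cycle i (k + 1) := by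
  decide +kernel

end LeavePoint

/-- There is a 2-(24,4,1) packing with 42 blocks whose leave is a vertex-disjoint
union of cycles of lengths [3, 3, 3, 3, 4, 4, 4], covering all 24 points. -/
theorem exists_max_packing_with_leave_type :
    ∃ B : Finset (Finset (Fin 24)), IsPacking B ∧ B.card = 42 ∧
      LeaveIsCycleType B [3, 3, 3, 3, 4, 4, 4] := by
  have e : LeavePoint ≃ Fin 24 := Fintype.equivFinOfCardEq rfl
  obtain ⟨hdisjoint, hleave⟩ :=
    LeavePoint.pairwiseDisjoint_offDiag_blocks_and_uncoveredPairs_blocks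
  exact ⟨relabel e LeavePoint.blocks,
    isPacking_relabel e (fun _ => LeavePoint.card_of_mem_blocks) hdisjoint,
    (card_relabel e _).trans LeavePoint.card_blocks,
    leaveIsCycleType_relabel e hleave LeavePoint.bijective_cycle LeavePoint.successor_cycle⟩
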